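/- For |q|<1, ∑_{n≥1} (n/5)·q^n/(1-q^n)^2 = q·(q^5;q^5)_∞^5/(q;q)_∞, where (n/5) is the Legendre symbol. -/

import Mathlib

open scoped BigOperators

instance : Fact (Nat.Prime 5) := ⟨by norm_num⟩

open Filter Topology

lemma isPreconnected_setOf_norm_mem_Ioo {a b : ℝ} (ha : 0 < a) (hb : 0 < b) :
    IsPreconnected {x : ℂ | a < ‖x‖ ∧ ‖x‖ < b} := by
  have himage : {x : ℂ | a < ‖x‖ ∧ ‖x‖ < b} =
      Complex.exp '' (Complex.re ⁻¹' Set.Ioo (Real.log a) (Real.log b)) := by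
    ext x
    constructor
    · rintro ⟨h1, h2⟩
      have hx : 0 < ‖x‖ := ha.trans h1
      refine ⟨Complex.log x, ⟨?_, ?_⟩, Complex.exp_log (norm_pos_iff.mp hx)⟩
      · rw [Complex.log_re]; exact Real.log_lt_log ha h1
      · rw [Complex.log_re]; exact Real.log_lt_log hx h2
    · rintro ⟨t, ⟨h1, h2⟩, rfl⟩
      rw [Set.mem_ofPred_eq, Complex.norm_exp]
      exact ⟨(Real.log_lt_iff_lt_exp ha).mp h1, (Real.lt_log_iff_exp_lt hb).mp h2⟩
  rw [himage]
  refine (Convex.isPreconnected ?_).image _ Complex.continuous_exp.continuousOn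
  exact (convex_Ioo _ _).linear_preimage Complex.reLm

/-- The open annulus `‖p‖ < ‖x‖ < ‖p‖⁻¹`. -/
def periodAnnulus (p : ℂ) : Set ℂ := {x | ‖p‖ < ‖x‖ ∧ ‖p‖ * ‖x‖ < 1}

lemma isOpen_periodAnnulus (p : ℂ) : IsOpen (periodAnnulus p) :=
  (isOpen_lt continuous_const continuous_norm).inter
    (isOpen_lt (continuous_const.mul continuous_norm) continuous_const)

lemma eq_of_multiplicatively_periodic {p : ℂ} (hp0 : p ≠ 0) (hp : ‖p‖ < 1) {F : ℂ → ℂ}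
    (hF : DifferentiableOn ℂ F (periodAnnulus p))
    (hper : ∀ x, x ∈ periodAnnulus p → p * x ∈ periodAnnulus p → F (p * x) = F x)
    {x y : ℂ} (hx : x ∈ periodAnnulus p) (hy : y ∈ periodAnnulus p) : F x = F y := by
  have hpos : 0 < ‖p‖ := norm_pos_iff.mpr hp0
  have hconn : IsPreconnected (periodAnnulus p) := by
    convert isPreconnected_setOf_norm_mem_Ioo hpos (one_div_pos.mpr hpos) using 1
    ext z
    simp only [periodAnnulus, Set.mem_ofPred_eq, lt_div_iff₀' hpos]
  set K : Set ℂ := {x | ‖p‖ ≤ ‖x‖ ^ 2 ∧ ‖p‖ * ‖x‖ ^ 2 ≤ 1} with hK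
  have hKU : K ⊆ periodAnnulus p := by
    rintro z ⟨h1, h2⟩
    have hz := norm_nonneg z
    constructor
    · by_contra! h
      nlinarith
    · by_contra! h
      nlinarith
  have hKc : IsCompact K := by
    refine Metric.isCompact_of_isClosed_isBounded ?_ ?_
    · exact (isClosed_le continuous_const (continuous_norm.pow 2)).inter
        (isClosed_le (continuous_const.mul (continuous_norm.pow 2)) continuous_const)
    · refine (Metric.isBounded_closedBall (x := (0 : ℂ)) (r := 1 / ‖p‖)).subset fun z hz ↦ ?_
      rw [mem_closedBall_zero_iff, le_div_iff₀' hpos]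
      exact (hKU hz).2.le
  have hK1 : (1 : ℂ) ∈ K := by simp [hK, hp.le]
  obtain ⟨c, hcK, hc⟩ := hKc.exists_isMaxOn ⟨1, hK1⟩ (hF.continuousOn.mono hKU).norm
  have hmax : IsMaxOn (norm ∘ F) (periodAnnulus p) c := by
    intro z hz
    have key : ∃ w ∈ K, F w = F z := by
      by_cases h1 : ‖p‖ ≤ ‖z‖ ^ 2
      · by_cases h2 : ‖p‖ * ‖z‖ ^ 2 ≤ 1
        · exact ⟨z, ⟨h1, h2⟩, rfl⟩
        · have hmem : p * z ∈ K := by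
            have := hz.2
            have := norm_nonneg z
            simp only [hK, Set.mem_ofPred_eq, norm_mul]
            constructor <;> nlinarith [mul_nonneg hpos.le (norm_nonneg z)]
          exact ⟨p * z, hmem, hper z hz (hKU hmem)⟩
      · have hmem : z / p ∈ K := by
          have h3 : ‖p‖ < ‖z‖ := hz.1
          simp only [hK, Set.mem_ofPred_eq, norm_div, div_pow]
          constructor
          · rw [le_div_iff₀ (by positivity)]
            nlinarith [pow_pos hpos 2]
          · rw [mul_div_assoc', div_le_iff₀ (by positivity)]
            nlinarith
        have hpz : p * (z / p) = z := by field_simp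
        exact ⟨z / p, hmem, by rw [← hper _ (hKU hmem) (by rwa [hpz]), hpz]⟩
    obtain ⟨w, hwK, hw⟩ := key
    simpa [hw] using hc hwK
  have h := Complex.eqOn_of_isPreconnected_of_isMaxOn_norm hconn (isOpen_periodAnnulus p) hF
    (hKU hcK) hmax
  rw [h hx, h hy]; rfl

/-- The infinite product `(x; p)_∞`. -/
noncomputable def qPoch (p x : ℂ) : ℂ := ∏' n : ℕ, (1 - x * p ^ n)

section qPoch

variable {p : ℂ}

lemma summable_norm_mul_pow (hp : ‖p‖ < 1) (x : ℂ) : Summable fun n : ℕ ↦ ‖-(x * p ^ n)‖ := by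
  simpa using (summable_geometric_of_lt_one (norm_nonneg p) hp).mul_left ‖x‖

lemma multipliable_qPoch (hp : ‖p‖ < 1) (x : ℂ) : Multipliable fun n : ℕ ↦ 1 - x * p ^ n := by
  simpa [sub_eq_add_neg] using multipliable_one_add_of_summable (summable_norm_mul_pow hp x)

lemma qPoch_eq_one_sub_mul (hp : ‖p‖ < 1) (x : ℂ) : qPoch p x = (1 - x) * qPoch p (p * x) := by
  rw [qPoch, tprod_eq_zero_mul']
  · simp [qPoch, pow_succ', mul_assoc, mul_left_comm]
  · simpa [pow_succ', mul_assoc, mul_left_comm] using multipliable_qPoch hp (p * x)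

lemma norm_mul_pow_lt_one (hp : ‖p‖ < 1) {x : ℂ} (hx : ‖x‖ < 1) (n : ℕ) : ‖x * p ^ n‖ < 1 := by
  rw [norm_mul, norm_pow]
  exact (mul_le_of_le_one_right (norm_nonneg _) (pow_le_one₀ (norm_nonneg _) hp.le)).trans_lt hx

lemma one_sub_ne_zero_of_norm_lt_one {u : ℂ} (hu : ‖u‖ < 1) : 1 - u ≠ 0 := by
  intro h
  rw [← sub_eq_zero.mp h] at hu
  simp at hu

lemma qPoch_ne_zero (hp : ‖p‖ < 1) {x : ℂ} (hx : ‖x‖ < 1) : qPoch p x ≠ 0 := by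
  simp only [qPoch, sub_eq_add_neg]
  refine tprod_one_add_ne_zero_of_summable (fun n ↦ ?_) (summable_norm_mul_pow hp x)
  simpa [sub_eq_add_neg] using one_sub_ne_zero_of_norm_lt_one (norm_mul_pow_lt_one hp hx n)

lemma differentiable_qPoch (hp : ‖p‖ < 1) : Differentiable ℂ (qPoch p) := by
  intro x
  have hu : Summable fun n : ℕ ↦ (‖x‖ + 1) * ‖p‖ ^ n :=
    (summable_geometric_of_lt_one (norm_nonneg p) hp).mul_left _
  have hprod := hu.hasProdLocallyUniformlyOn_nat_one_add (f := fun n z ↦ -(z * p ^ n))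
    (K := Metric.ball (0 : ℂ) (‖x‖ + 1)) Metric.isOpen_ball
    (.of_forall fun n z hz ↦ by
      rw [norm_neg, norm_mul, norm_pow]
      gcongr
      exact (mem_ball_zero_iff.mp hz).le) (fun _ ↦ by fun_prop)
  have hd := hprod.differentiableOn
    (.of_forall fun _ ↦ by simpa [Finset.prod_fn] using
      DifferentiableOn.finsetProd (fun _ _ ↦ by fun_prop)) Metric.isOpen_ball
  simp only [← sub_eq_add_neg] at hd
  exact hd.differentiableAt (Metric.isOpen_ball.mem_nhds (by simp))

end qPoch

/-- The Koebe function `u / (1 - u)²`. -/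
noncomputable def koebe (u : ℂ) : ℂ := u / (1 - u) ^ 2

lemma koebe_one_div {u : ℂ} (hu : u ≠ 0) : koebe (1 / u) = koebe u := by
  rcases eq_or_ne u 1 with rfl | h1
  · simp
  have h2 : u - 1 ≠ 0 := sub_ne_zero.mpr h1
  have h3 : 1 - u ≠ 0 := sub_ne_zero.mpr h1.symm
  rw [koebe, koebe, one_sub_div hu]
  field_simp
  ring

/-- The Lambert-type series `∑ x pⁿ / (1 - x pⁿ)²`. -/
noncomputable def koebeSum (p x : ℂ) : ℂ := ∑' n : ℕ, koebe (x * p ^ n)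

lemma norm_koebe_le {u : ℂ} {r : ℝ} (hr : r < 1) (hu : ‖u‖ ≤ r) :
    ‖koebe u‖ ≤ ‖u‖ / (1 - r) ^ 2 := by
  rw [koebe, norm_div, norm_pow]
  have : 1 - r ≤ ‖1 - u‖ := by
    have := norm_sub_norm_le 1 u
    rw [norm_one] at this
    linarith
  have h0 : 0 < 1 - r := by linarith
  gcongr

section koebeSum

variable {p : ℂ}

lemma norm_koebe_mul_pow_le (hp : ‖p‖ < 1) {x : ℂ} {r : ℝ} (hr : r < 1) (hx : ‖x‖ ≤ r) (n : ℕ) :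
    ‖koebe (x * p ^ n)‖ ≤ r / (1 - r) ^ 2 * ‖p‖ ^ n := by
  have h1 : ‖x * p ^ n‖ ≤ r * ‖p‖ ^ n := by
    rw [norm_mul, norm_pow]; gcongr
  have h2 : r * ‖p‖ ^ n ≤ r :=
    mul_le_of_le_one_right ((norm_nonneg x).trans hx) (pow_le_one₀ (norm_nonneg _) hp.le)
  calc ‖koebe (x * p ^ n)‖ ≤ ‖x * p ^ n‖ / (1 - r) ^ 2 := norm_koebe_le hr (h1.trans h2)
    _ ≤ r * ‖p‖ ^ n / (1 - r) ^ 2 := by gcongr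
    _ = _ := by ring

lemma summable_koebe (hp : ‖p‖ < 1) {x : ℂ} (hx : ‖x‖ < 1) :
    Summable fun n : ℕ ↦ koebe (x * p ^ n) :=
  .of_norm_bounded ((summable_geometric_of_lt_one (norm_nonneg p) hp).mul_left _)
    (norm_koebe_mul_pow_le hp hx le_rfl)

lemma koebeSum_eq_add (hp : ‖p‖ < 1) {x : ℂ} (hx : ‖p * x‖ < 1) :
    koebeSum p x = koebe x + koebeSum p (p * x) := by
  rw [koebeSum, tsum_eq_zero_add']
  · simp [koebeSum, pow_succ', mul_assoc, mul_left_comm]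
  · simpa [pow_succ', mul_assoc, mul_left_comm] using summable_koebe hp hx

lemma differentiableOn_koebeSum (hp : ‖p‖ < 1) :
    DifferentiableOn ℂ (koebeSum p) (Metric.ball 0 1) := by
  intro x hx
  obtain ⟨r, hxr, hr⟩ := exists_between (mem_ball_zero_iff.mp hx)
  have hd : DifferentiableOn ℂ (koebeSum p) (Metric.ball 0 r) := by
    refine Complex.differentiableOn_tsum_of_summable_norm
      ((summable_geometric_of_lt_one (norm_nonneg p) hp).mul_left (r / (1 - r) ^ 2))
      (fun n z hz ↦ ?_) Metric.isOpen_ball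
      fun n z hz ↦ norm_koebe_mul_pow_le hp hr (mem_ball_zero_iff.mp hz).le n
    have hne := one_sub_ne_zero_of_norm_lt_one
      (norm_mul_pow_lt_one hp ((mem_ball_zero_iff.mp hz).trans hr) n)
    unfold koebe
    have hd : DifferentiableAt ℂ (fun w : ℂ ↦ (1 - w * p ^ n) ^ 2) z := by fun_prop
    exact (DifferentiableAt.div (by fun_prop) hd (pow_ne_zero 2 hne)).differentiableWithinAt
  exact (hd.differentiableAt
    (Metric.isOpen_ball.mem_nhds (mem_ball_zero_iff.mpr hxr))).differentiableWithinAt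

end koebeSum

/-- The theta function `(x; p)_∞ (p / x; p)_∞`. -/
noncomputable def qTheta (p x : ℂ) : ℂ := qPoch p x * qPoch p (p / x)

section qTheta

variable {p : ℂ}

lemma qTheta_one (hp : ‖p‖ < 1) : qTheta p 1 = 0 := by
  simp [qTheta, qPoch_eq_one_sub_mul hp 1]

lemma qTheta_div (hp0 : p ≠ 0) (x : ℂ) : qTheta p (p / x) = qTheta p x := by
  rw [qTheta, qTheta, div_div_cancel₀ hp0, mul_comm]

lemma qTheta_ne_zero (hp : ‖p‖ < 1) {x : ℂ} (hx : ‖x‖ < 1) (hpx : ‖p‖ < ‖x‖) :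
    qTheta p x ≠ 0 := by
  refine mul_ne_zero (qPoch_ne_zero hp hx) (qPoch_ne_zero hp ?_)
  rwa [norm_div, div_lt_one ((norm_nonneg p).trans_lt hpx)]

lemma qTheta_mul_left (hp0 : p ≠ 0) (hp : ‖p‖ < 1) {x : ℂ} (hx : x ≠ 0) :
    qTheta p (p * x) = -qTheta p x / x := by
  have h1 : p / (p * x) = 1 / x := by field_simp
  rw [qTheta, qTheta, h1, qPoch_eq_one_sub_mul hp x, qPoch_eq_one_sub_mul hp (1 / x),
    mul_one_div]
  field_simp
  ring

lemma differentiableAt_qTheta (hp : ‖p‖ < 1) {x : ℂ} (hx : x ≠ 0) :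
    DifferentiableAt ℂ (qTheta p) x :=
  (differentiable_qPoch hp x).mul
    ((differentiable_qPoch hp _).comp x ((differentiableAt_const p).div differentiableAt_id hx))

end qTheta

/-- The bilateral Lambert-type series `∑ x pⁿ / (1 - x pⁿ)²`, `n ∈ ℤ`, folded onto `ℕ`. -/
noncomputable def bilateralKoebeSum (p x : ℂ) : ℂ :=
  koebe x + koebeSum p (p * x) + koebeSum p (p / x)

lemma ne_zero_of_mem_periodAnnulus {p x : ℂ} (hx : x ∈ periodAnnulus p) : x ≠ 0 :=
  norm_pos_iff.mp ((norm_nonneg p).trans_lt hx.1)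

lemma norm_mul_lt_one_of_mem_periodAnnulus {p x : ℂ} (hx : x ∈ periodAnnulus p) :
    ‖p * x‖ < 1 := by
  rw [norm_mul]; exact hx.2

lemma norm_div_lt_one_of_mem_periodAnnulus {p x : ℂ} (hx : x ∈ periodAnnulus p) :
    ‖p / x‖ < 1 := by
  rw [norm_div, div_lt_one ((norm_nonneg p).trans_lt hx.1)]; exact hx.1

lemma bilateralKoebeSum_mul_left {p x : ℂ} (hp0 : p ≠ 0) (hp : ‖p‖ < 1)
    (hx : x ∈ periodAnnulus p) :
    bilateralKoebeSum p (p * x) = bilateralKoebeSum p x := by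
  have hx0 := ne_zero_of_mem_periodAnnulus hx
  have h1 : p / (p * x) = 1 / x := by field_simp
  have h2 : ‖p * (p * x)‖ < 1 := by
    rw [norm_mul]
    exact mul_lt_one_of_nonneg_of_lt_one_left (norm_nonneg _) hp
      (norm_mul_lt_one_of_mem_periodAnnulus hx).le
  have h3 : p * (1 / x) = p / x := mul_one_div p x
  rw [bilateralKoebeSum, bilateralKoebeSum, h1, koebeSum_eq_add hp h2,
    koebeSum_eq_add hp (x := 1 / x) (h3 ▸ norm_div_lt_one_of_mem_periodAnnulus hx), h3,
    koebe_one_div hx0]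
  ring

lemma deriv_one_eq_zero_of_comp_inv {f : ℂ → ℂ} (hf : DifferentiableAt ℂ f 1)
    (hinv : ∀ x, f x⁻¹ = f x) : deriv f 1 = 0 := by
  have h1 : HasDerivAt f (deriv f 1) ((1 : ℂ)⁻¹) := by simpa using hf.hasDerivAt
  have h2 : HasDerivAt (fun x ↦ f x⁻¹) (deriv f 1 * -((1 : ℂ) ^ 2)⁻¹) 1 :=
    h1.comp 1 (hasDerivAt_inv one_ne_zero)
  simp only [hinv] at h2
  have h3 := hf.hasDerivAt.unique h2
  simp only [one_pow, inv_one, mul_neg, mul_one] at h3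
  linear_combination h3 / 2

/-- The addition formula `℘(x) - ℘(y) = -σ(x + y) σ(x - y) / (σ(x)² σ(y)²)` in multiplicative
form. -/
lemma bilateralKoebeSum_sub {p x y : ℂ} (hp0 : p ≠ 0) (hp : ‖p‖ < 1) (hy : ‖y‖ < 1)
    (hpy : ‖p‖ < ‖y‖) (hx : x ∈ periodAnnulus p) (hx1 : x ≠ 1) :
    bilateralKoebeSum p x - bilateralKoebeSum p y =
      x * qPoch p p ^ 4 * qTheta p (x * y) * qTheta p (y / x) /
        (qTheta p x ^ 2 * qTheta p y ^ 2) := by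
  have hy0 : y ≠ 0 := norm_pos_iff.mp ((norm_nonneg p).trans_lt hpy)
  have hyU : y ∈ periodAnnulus p := ⟨hpy, by nlinarith [norm_nonneg p, norm_nonneg y]⟩
  have hy1 : y ≠ 1 := by rintro rfl; simp at hy
  have h1U : (1 : ℂ) ∈ periodAnnulus p := by simp [periodAnnulus, hp]
  have hUnhds : periodAnnulus p ∈ 𝓝 (1 : ℂ) := (isOpen_periodAnnulus p).mem_nhds h1U
  have hθy := qTheta_ne_zero hp hy hpy
  have hpp := qPoch_ne_zero hp hp
  set C : ℂ := qPoch p p ^ 4 / qTheta p y ^ 2 with hC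
  let A : ℂ → ℂ := fun x ↦ qPoch p (p * x) * qPoch p (p / x)
  have hA0 : ∀ x ∈ periodAnnulus p, A x ≠ 0 := fun x hx ↦
    mul_ne_zero (qPoch_ne_zero hp (norm_mul_lt_one_of_mem_periodAnnulus hx))
      (qPoch_ne_zero hp (norm_div_lt_one_of_mem_periodAnnulus hx))
  have hθA : ∀ x, qTheta p x = (1 - x) * A x := fun x ↦ by
    rw [qTheta, qPoch_eq_one_sub_mul hp x, mul_assoc]
  let N : ℂ → ℂ := fun x ↦ 1 - C * qTheta p (x * y) * qTheta p (y / x) / A x ^ 2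
  have hN : DifferentiableOn ℂ N (periodAnnulus p) := by
    intro z hz
    have hz0 := ne_zero_of_mem_periodAnnulus hz
    have hdiv : ∀ c : ℂ, DifferentiableAt ℂ (fun w ↦ c / w) z := fun c ↦
      (differentiableAt_const c).div differentiableAt_id hz0
    have hA : DifferentiableAt ℂ A z :=
      ((differentiable_qPoch hp _).comp z (differentiableAt_id.const_mul p)).mul
        ((differentiable_qPoch hp _).comp z (hdiv p))
    have h1 : DifferentiableAt ℂ (fun w ↦ qTheta p (w * y)) z :=
      (differentiableAt_qTheta hp (mul_ne_zero hz0 hy0)).comp z (differentiableAt_id.mul_const y)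
    have h2 : DifferentiableAt ℂ (fun w ↦ qTheta p (y / w)) z :=
      (differentiableAt_qTheta hp (div_ne_zero hy0 hz0)).comp z (hdiv y)
    exact (((((differentiableAt_const C).mul h1).mul h2).div (hA.pow 2)
      (pow_ne_zero 2 (hA0 z hz))).const_sub 1).differentiableWithinAt
  have hN1 : N 1 = 0 := by
    simp only [N, A, hC, one_mul, mul_one, div_one]
    field_simp
    ring
  have hNinv : ∀ x, N x⁻¹ = N x := fun x ↦ by
    simp only [N, A, div_inv_eq_mul, ← div_eq_mul_inv, inv_mul_eq_div, mul_comm y x]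
    ring
  have hdN1 := deriv_one_eq_zero_of_comp_inv (hN.differentiableAt hUnhds) hNinv
  let F : ℂ → ℂ := fun x ↦ x * dslope (dslope N 1) 1 x + koebeSum p (p * x) + koebeSum p (p / x)
  have hF : DifferentiableOn ℂ F (periodAnnulus p) := by
    have h1 : DifferentiableOn ℂ (dslope (dslope N 1) 1) (periodAnnulus p) :=
      (Complex.differentiableOn_dslope hUnhds).mpr
        ((Complex.differentiableOn_dslope hUnhds).mpr hN)
    have h2 : DifferentiableOn ℂ (fun x ↦ koebeSum p (p * x)) (periodAnnulus p) :=
      (differentiableOn_koebeSum hp).comp (by fun_prop) fun z hz ↦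
        mem_ball_zero_iff.mpr (norm_mul_lt_one_of_mem_periodAnnulus hz)
    have h3 : DifferentiableOn ℂ (fun x ↦ koebeSum p (p / x)) (periodAnnulus p) :=
      (differentiableOn_koebeSum hp).comp
        ((differentiableOn_const p).div differentiableOn_id
          fun z hz ↦ ne_zero_of_mem_periodAnnulus hz) fun z hz ↦
        mem_ball_zero_iff.mpr (norm_div_lt_one_of_mem_periodAnnulus hz)
    exact ((differentiableOn_id.mul h1).add h2).add h3
  have hFeq : ∀ z ∈ periodAnnulus p, z ≠ 1 → F z =
      bilateralKoebeSum p z - z * C * qTheta p (z * y) * qTheta p (z⁻¹ * y) / qTheta p z ^ 2 := by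
    intro z hz hz1
    have hzA := hA0 z hz
    have hz2 : z - 1 ≠ 0 := sub_ne_zero.mpr hz1
    have hz3 : 1 - z ≠ 0 := sub_ne_zero.mpr hz1.symm
    have hsq : (z - 1) ^ 2 = (1 - z) ^ 2 := by ring
    have hd : dslope (dslope N 1) 1 z = N z / (1 - z) ^ 2 := by
      rw [dslope_of_ne _ hz1, slope_def_field, dslope_same, hdN1, dslope_of_ne _ hz1,
        slope_def_field, hN1, sub_zero, sub_zero, div_div, ← sq, hsq]
    simp only [F, hd, bilateralKoebeSum, koebe, hθA z, N, inv_mul_eq_div]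
    field_simp
    ring
  have hper : ∀ z, z ∈ periodAnnulus p → p * z ∈ periodAnnulus p → F (p * z) = F z := by
    intro z hz hpz
    have hz0 := ne_zero_of_mem_periodAnnulus hz
    have hz1 : z ≠ 1 := by
      rintro rfl
      simpa using hpz.1
    have hpz1 : p * z ≠ 1 := fun h ↦ by
      have := norm_mul_lt_one_of_mem_periodAnnulus hz
      simp [h] at this
    have h1 : qTheta p ((p * z)⁻¹ * y) = -((p * z)⁻¹ * y) * qTheta p (z⁻¹ * y) := by
      have h := qTheta_mul_left hp0 hp (x := (p * z)⁻¹ * y) (by simp [hp0, hz0, hy0])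
      have h' : p * ((p * z)⁻¹ * y) = z⁻¹ * y := by field_simp
      rw [h'] at h
      rw [h]
      field_simp
    rw [hFeq _ hpz hpz1, hFeq _ hz hz1, bilateralKoebeSum_mul_left hp0 hp hz, h1, mul_assoc p z y,
      qTheta_mul_left hp0 hp (mul_ne_zero hz0 hy0), qTheta_mul_left hp0 hp hz0]
    congr 1
    have hzA := hA0 z hz
    have hz3 : 1 - z ≠ 0 := sub_ne_zero.mpr hz1.symm
    rw [hθA z]
    field_simp
  have hxy := eq_of_multiplicatively_periodic hp0 hp hF hper hx hyU
  rw [hFeq x hx hx1, hFeq y hyU hy1, inv_mul_cancel₀ hy0, qTheta_one hp, inv_mul_eq_div] at hxy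
  have hθx : qTheta p x ≠ 0 := by
    rw [hθA]; exact mul_ne_zero (sub_ne_zero.mpr hx1.symm) (hA0 x hx)
  have hxy' : bilateralKoebeSum p x - bilateralKoebeSum p y =
      x * C * qTheta p (x * y) * qTheta p (y / x) / qTheta p x ^ 2 := by
    linear_combination hxy
  rw [hxy', hC]
  field_simp

lemma koebeSum_add_koebeSum_div {p x : ℂ} (hp : ‖p‖ < 1) (hx : ‖p * x‖ < 1) :
    koebeSum p x + koebeSum p (p / x) = bilateralKoebeSum p x := by
  rw [bilateralKoebeSum, koebeSum_eq_add hp hx]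

lemma qPoch_self_eq_prod {q : ℂ} (hq : ‖q‖ < 1) (hp : ‖q ^ 5‖ < 1) :
    qPoch q q = qPoch (q ^ 5) q * qPoch (q ^ 5) (q ^ 2) * qPoch (q ^ 5) (q ^ 3) *
      qPoch (q ^ 5) (q ^ 4) * qPoch (q ^ 5) (q ^ 5) := by
  have hlim := fun x ↦ (multipliable_qPoch hp x).hasProd.tendsto_prod_nat
  have h1 := ((((hlim q).mul (hlim (q ^ 2))).mul (hlim (q ^ 3))).mul (hlim (q ^ 4))).mul
    (hlim (q ^ 5))
  have h2 := (multipliable_qPoch hq q).hasProd.tendsto_prod_nat.comp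
    (tendsto_id.const_mul_atTop' (show 0 < 5 by norm_num))
  refine tendsto_nhds_unique h2 (h1.congr fun m ↦ ?_)
  simp only [Function.comp_apply, id_eq]
  induction m with
  | zero => simp
  | succ m ih =>
    rw [mul_add, mul_one]
    simp only [Finset.prod_range_succ, ← ih]
    ring

lemma tsum_legendreSym_mul_koebe {q : ℂ} (hq : ‖q‖ < 1) (hp : ‖q ^ 5‖ < 1) :
    ∑' n : ℕ, (legendreSym 5 ((n : ℤ) + 1) : ℂ) * q ^ (n + 1) / (1 - q ^ (n + 1)) ^ 2 =
      koebeSum (q ^ 5) q - koebeSum (q ^ 5) (q ^ 2) - koebeSum (q ^ 5) (q ^ 3) +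
        koebeSum (q ^ 5) (q ^ 4) := by
  have hpow : ∀ k : ℕ, k ≠ 0 → ‖q ^ k‖ < 1 := fun k hk ↦ by
    rw [norm_pow]; exact pow_lt_one₀ (norm_nonneg _) hq hk
  have hlim := fun (x : ℂ) (hx : ‖x‖ < 1) ↦ (summable_koebe hp hx).hasSum.tendsto_sum_nat
  have h1 := (((hlim q hq).sub (hlim _ (hpow 2 (by norm_num)))).sub
    (hlim _ (hpow 3 (by norm_num)))).add (hlim _ (hpow 4 (by norm_num)))
  have hterm : ∀ n : ℕ, (legendreSym 5 ((n : ℤ) + 1) : ℂ) * q ^ (n + 1) / (1 - q ^ (n + 1)) ^ 2 =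
      (legendreSym 5 ((n : ℤ) + 1) : ℂ) * koebe (q * q ^ n) := fun n ↦ by
    rw [koebe, pow_succ' q n, mul_div_assoc]
  simp only [hterm]
  have hsum : Summable fun n : ℕ ↦ (legendreSym 5 ((n : ℤ) + 1) : ℂ) * koebe (q * q ^ n) := by
    refine .of_norm_bounded (summable_koebe hq hq).norm fun n ↦ ?_
    rw [norm_mul]
    refine mul_le_of_le_one_left (norm_nonneg _) ?_
    by_cases h : (((n : ℤ) + 1 : ℤ) : ZMod 5) = 0
    · simp [(legendreSym.eq_zero_iff 5 _).mpr h]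
    · rcases legendreSym.eq_one_or_neg_one 5 h with h | h <;> simp [h]
  have h2 := hsum.hasSum.tendsto_sum_nat.comp
    (tendsto_id.const_mul_atTop' (show 0 < 5 by norm_num))
  refine tendsto_nhds_unique h2 (h1.congr fun m ↦ ?_)
  simp only [Function.comp_apply, id_eq]
  induction m with
  | zero => simp
  | succ m ih =>
    have hleg : ∀ r : ℕ, legendreSym 5 (((5 * m + r : ℕ) : ℤ) + 1) = legendreSym 5 (r + 1) := by
      intro r
      rw [legendreSym.mod, legendreSym.mod 5 ((r : ℤ) + 1)]
      congr 1
      push_cast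
      omega
    have e0 : legendreSym 5 (((5 * m : ℕ) : ℤ) + 1) = 1 := (hleg 0).trans (by decide)
    have e1 : legendreSym 5 (((5 * m + 1 : ℕ) : ℤ) + 1) = -1 := (hleg 1).trans (by decide)
    have e2 : legendreSym 5 (((5 * m + 2 : ℕ) : ℤ) + 1) = -1 := (hleg 2).trans (by decide)
    have e3 : legendreSym 5 (((5 * m + 3 : ℕ) : ℤ) + 1) = 1 := (hleg 3).trans (by decide)
    have e4 : legendreSym 5 (((5 * m + 4 : ℕ) : ℤ) + 1) = 0 := (hleg 4).trans (by decide)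
    have k : ∀ r : ℕ, q * q ^ (5 * m + r) = q ^ (r + 1) * (q ^ 5) ^ m := fun r ↦ by ring
    have k0 : q * q ^ (5 * m) = q * (q ^ 5) ^ m := by ring
    rw [mul_add, mul_one]
    simp only [Finset.sum_range_succ, ← ih, e0, e1, e2, e3, e4, k, k0]
    push_cast
    ring

/-- Ramanujan's companion identity:
`∑_{n ≥ 1} (n/5) qⁿ/(1-qⁿ)² = q (q⁵;q⁵)_∞⁵ / (q;q)_∞` for `|q| < 1`. -/
theorem ramanujan_lost_notebook_mod5' (q : ℂ) (hq : ‖q‖ < 1) :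
    ∑' n : ℕ, (legendreSym 5 ((n : ℤ) + 1) : ℂ) * q ^ (n + 1) / (1 - q ^ (n + 1)) ^ 2
      = q * (∏' n : ℕ, (1 - (q ^ 5) ^ (n + 1))) ^ 5 / ∏' n : ℕ, (1 - q ^ (n + 1)) := by
  rcases eq_or_ne q 0 with rfl | hq0
  · simp
  have hnorm : 0 < ‖q‖ := norm_pos_iff.mpr hq0
  have hpow : ∀ k : ℕ, k ≠ 0 → ‖q ^ k‖ < 1 := fun k hk ↦ by
    rw [norm_pow]; exact pow_lt_one₀ (norm_nonneg _) hq hk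
  have hlt : ∀ k : ℕ, k < 5 → ‖q ^ 5‖ < ‖q ^ k‖ := fun k hk ↦ by
    rw [norm_pow, norm_pow]; exact pow_lt_pow_right_of_lt_one₀ hnorm hq hk
  have hp := hpow 5 (by norm_num)
  have hp0 : q ^ 5 ≠ 0 := pow_ne_zero 5 hq0
  have hmul : ∀ x : ℂ, ‖x‖ < 1 → ‖q ^ 5 * x‖ < 1 := fun x hx ↦ by
    rw [norm_mul]; exact mul_lt_one_of_nonneg_of_lt_one_left (norm_nonneg _) hp hx.le
  have hpoch : ∀ r : ℂ, ∏' n : ℕ, (1 - r ^ (n + 1)) = qPoch r r := fun r ↦ by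
    simp only [qPoch, pow_succ']
  have d1 : q ^ 5 / q = q ^ 4 := by field_simp
  have d2 : q ^ 5 / q ^ 2 = q ^ 3 := by field_simp
  have hqU : q ∈ periodAnnulus (q ^ 5) :=
    ⟨by simpa using hlt 1 (by norm_num), by simpa using hmul q hq⟩
  have hq1 : q ≠ 1 := by rintro rfl; simp at hq
  have hP1 := koebeSum_add_koebeSum_div hp (hmul q hq)
  have hP2 := koebeSum_add_koebeSum_div hp (hmul _ (hpow 2 (by norm_num)))
  have key := bilateralKoebeSum_sub hp0 hp (hpow 2 (by norm_num)) (hlt 2 (by norm_num)) hqU hq1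
  rw [← hP1, ← hP2, d1, d2] at key
  have h3 : qTheta (q ^ 5) (q * q ^ 2) = qTheta (q ^ 5) (q ^ 2) := by
    rw [← qTheta_div hp0 (q ^ 2), d2]; congr 1; ring
  have h4 : q ^ 2 / q = q := by field_simp
  rw [h3, h4] at key
  have n1 := qPoch_ne_zero hp hq
  have n2 := qPoch_ne_zero hp (hpow 2 (by norm_num))
  have n3 := qPoch_ne_zero hp (hpow 3 (by norm_num))
  have n4 := qPoch_ne_zero hp (hpow 4 (by norm_num))
  have n5 := qPoch_ne_zero hp hp
  rw [tsum_legendreSym_mul_koebe hq hp, hpoch, hpoch, qPoch_self_eq_prod hq hp]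
  have e : qTheta (q ^ 5) q = qPoch (q ^ 5) q * qPoch (q ^ 5) (q ^ 4) := by rw [qTheta, d1]
  have e' : qTheta (q ^ 5) (q ^ 2) = qPoch (q ^ 5) (q ^ 2) * qPoch (q ^ 5) (q ^ 3) := by
    rw [qTheta, d2]
  rw [e, e'] at key
  refine Eq.trans (by ring) (key.trans ?_)
  field_simp
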